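/- Let a_1,...,a_p, b_1,...,b_q ∈ R^n with positive weights α_i, β_j satisfying Σ_i α_i = Σ_j β_j, and let f(x) = Σ_i α_i ‖x − a_i‖ − Σ_j β_j ‖x − b_j‖. If w := Σ_i α_i a_i − Σ_j β_j b_j = 0, then f(x) → 0 as ‖x‖ → ∞. -/

import Mathlib

open scoped RealInnerProductSpace in
/-- First-order expansion of `‖x - a‖` for large `x`, multiplied through by `‖x‖`. -/
theorem abs_norm_mul_norm_sub_expansion_le {E : Type*} [NormedAddCommGroup E]
    [InnerProductSpace ℝ E] (x a : E) :
    |‖x‖ * ‖x - a‖ - ‖x‖ ^ 2 + ⟪x, a⟫| ≤ ‖a‖ ^ 2 / 2 := by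
  have hsq := norm_sub_sq_real x a
  have habs : |‖x - a‖ - ‖x‖| ≤ ‖a‖ := by
    simpa using abs_norm_sub_norm_le (x - a) x
  have hle : (‖x - a‖ - ‖x‖) ^ 2 ≤ ‖a‖ ^ 2 := sq_le_sq' (abs_le.mp habs).1 (abs_le.mp habs).2
  rw [abs_le]
  constructor <;> nlinarith [sq_nonneg (‖x - a‖ - ‖x‖), sq_nonneg ‖a‖]

open scoped RealInnerProductSpace in
theorem abs_norm_mul_sum_norm_sub_expansion_le {E ι : Type*} [NormedAddCommGroup E]
    [InnerProductSpace ℝ E] [Fintype ι] (c : ι → ℝ) (hc : ∀ i, 0 ≤ c i) (a : ι → E) (x : E) :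
    |‖x‖ * ∑ i, c i * ‖x - a i‖ - ‖x‖ ^ 2 * ∑ i, c i + ⟪x, ∑ i, c i • a i⟫| ≤
      ∑ i, c i * (‖a i‖ ^ 2 / 2) := by
  have heq : ‖x‖ * ∑ i, c i * ‖x - a i‖ - ‖x‖ ^ 2 * ∑ i, c i + ⟪x, ∑ i, c i • a i⟫ =
      ∑ i, c i * (‖x‖ * ‖x - a i‖ - ‖x‖ ^ 2 + ⟪x, a i⟫) := by
    simp only [inner_sum, real_inner_smul_right, Finset.mul_sum]
    rw [← Finset.sum_sub_distrib, ← Finset.sum_add_distrib]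
    exact Finset.sum_congr rfl fun i _ => by ring
  rw [heq]
  refine (Finset.abs_sum_le_sum_abs _ _).trans (Finset.sum_le_sum fun i _ => ?_)
  rw [abs_mul, abs_of_nonneg (hc i)]
  exact mul_le_mul_of_nonneg_left (abs_norm_mul_norm_sub_expansion_le x (a i)) (hc i)


theorem tendsto_zero_when_w_eq_zero (n p q : ℕ)
    (a : Fin p → EuclideanSpace ℝ (Fin n)) (b : Fin q → EuclideanSpace ℝ (Fin n))
    (α : Fin p → ℝ) (β : Fin q → ℝ)
    (hα : ∀ i, 0 < α i) (hβ : ∀ j, 0 < β j)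
    (hw : ∑ i, α i = ∑ j, β j)
    (f : EuclideanSpace ℝ (Fin n) → ℝ)
    (hf : ∀ x, f x = ∑ i, α i * ‖x - a i‖ - ∑ j, β j * ‖x - b j‖)
    (hzero : ∑ i, α i • a i - ∑ j, β j • b j = 0) :
    ∀ ε > 0, ∃ R : ℝ, ∀ x, R ≤ ‖x‖ → |f x| < ε := by
  intro ε hε
  have hα' : ∀ i, 0 ≤ α i := fun i => (hα i).le
  have hβ' : ∀ j, 0 ≤ β j := fun j => (hβ j).le
  set C := ∑ i, α i * (‖a i‖ ^ 2 / 2) + ∑ j, β j * (‖b j‖ ^ 2 / 2)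
  have hC0 : 0 ≤ C := add_nonneg
    (Finset.sum_nonneg fun i _ => mul_nonneg (hα' i) (by positivity))
    (Finset.sum_nonneg fun j _ => mul_nonneg (hβ' j) (by positivity))
  refine ⟨C / ε + 1, fun x hx => ?_⟩
  have hx0 : 0 < ‖x‖ := by
    have : 0 ≤ C / ε := by positivity
    linarith
  have hCx : C < ‖x‖ * ε := (div_lt_iff₀ hε).mp (by linarith)
  have h₁ := abs_le.mp (abs_norm_mul_sum_norm_sub_expansion_le α hα' a x)
  have h₂ := abs_le.mp (abs_norm_mul_sum_norm_sub_expansion_le β hβ' b x)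
  rw [hw, sub_eq_zero.mp hzero] at h₁
  have hmul : |‖x‖ * f x| ≤ C := by
    rw [hf, mul_sub, abs_le]
    constructor <;> linarith [h₁.1, h₁.2, h₂.1, h₂.2]
  rw [abs_mul, abs_of_pos hx0] at hmul
  exact lt_of_mul_lt_mul_left (hmul.trans_lt hCx) hx0.le
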